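/- Let G be a finite simple graph on vertex set V and let B be a positive semidefinite zero forcing set of G. Then for every positive semidefinite A ∈ S(G), the nullity of A is at most the cardinality of B. -/

import Mathlib

open scoped ComplexOrder

/-- One step of the positive semidefinite color change rule: `B'` is obtained from `B`
by adding a vertex `w ∉ B` which is the unique neighbor of some `v ∈ B` lying in the
connected component of `w` in the induced subgraph of `G` on the complement of `B`. -/
def PSDZFStep {V : Type*} [DecidableEq V] (G : SimpleGraph V) (B B' : Finset V) : Prop :=
  ∃ v ∈ B, ∃ w : V, ∃ hw : w ∉ B, G.Adj v w ∧
    (∀ u : V, G.Adj v u → ∀ hu : u ∉ B,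
      (G.induce {a : V | a ∉ B}).Reachable ⟨u, hu⟩ ⟨w, hw⟩ → u = w) ∧
    B' = insert w B

/-- `B` is a positive semidefinite zero forcing set of `G` if repeated application of
the positive semidefinite color change rule starting from `B` colors all vertices
black. -/
def IsPSDZeroForcingSet {V : Type*} [Fintype V] [DecidableEq V]
    (G : SimpleGraph V) (B : Finset V) : Prop :=
  Relation.ReflTransGen (PSDZFStep G) B Finset.univ

/-!
Let `A` be positive semidefinite with graph `G`, and let `x` be a kernel vector of `A` vanishing on
the black vertices. If `C` is a connected component of the white vertices, the rows of `A` indexed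
by `C` see only the part `y` of `x` supported on `C`, so `A y` vanishes on `C` and `yᴴ A y = 0`.
By positive semidefiniteness `A y = 0`, whence at a black vertex `v` whose only neighbor in `C` is
`w` we read off `A v w * x w = 0`. Hence `x` stays zero along the forcing process: a kernel vector
is determined by its restriction to a zero forcing set.
-/

section Component

variable {V : Type*} {G : SimpleGraph V} {S : Set V} {w : V}

/-- The connected component of `w` in the subgraph of `G` induced on `S`, as a set of vertices
of `G`. It is empty if `w ∉ S`. -/
def componentWithin (G : SimpleGraph V) (S : Set V) (w : V) : Set V :=
  {u | ∃ (hu : u ∈ S) (hw : w ∈ S), (G.induce S).Reachable ⟨u, hu⟩ ⟨w, hw⟩}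

theorem mem_componentWithin_self (hw : w ∈ S) : w ∈ componentWithin G S w :=
  ⟨hw, hw, .refl _⟩

theorem mem_componentWithin_of_adj {i j : V} (hi : i ∈ componentWithin G S w)
    (hij : G.Adj i j) (hj : j ∈ S) : j ∈ componentWithin G S w := by
  obtain ⟨hiS, hw, hreach⟩ := hi
  have hadj : (G.induce S).Adj ⟨j, hj⟩ ⟨i, hiS⟩ := hij.symm
  exact ⟨hj, hw, hadj.reachable.trans hreach⟩

end Component

theorem mulVec_indicator_apply_of_mul_eq_zero {m n R : Type*} [Fintype n]
    [NonUnitalNonAssocSemiring R]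
    (A : Matrix m n R) {C : Set n} {x : n → R} {i : m} (h : ∀ j ∉ C, A i j * x j = 0) :
    A.mulVec (C.indicator x) i = A.mulVec x i := by
  refine Finset.sum_congr rfl fun j _ => ?_
  by_cases hj : j ∈ C
  · rw [Set.indicator_of_mem hj]
  · rw [Set.indicator_of_notMem hj, mul_zero, h j hj]

theorem finrank_submodule_le_card_of_eq_zero_on {ι R : Type*} [Ring R] [StrongRankCondition R]
    (K : Submodule R (ι → R)) (B : Finset ι) (h : ∀ x ∈ K, (∀ i ∈ B, x i = 0) → x = 0) :
    Module.finrank R K ≤ B.card := by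
  let restrict : K →ₗ[R] (B → R) := (LinearMap.funLeft R R Subtype.val).comp K.subtype
  have restrict_injective : Function.Injective restrict := by
    rw [injective_iff_map_eq_zero]
    intro x hx
    exact Subtype.ext (h x x.2 fun i hi => congrFun hx ⟨i, hi⟩)
  simpa using LinearMap.finrank_le_finrank_of_injective restrict_injective

section PosSemidef

variable {V 𝕜 : Type*} [Fintype V] [RCLike 𝕜] {G : SimpleGraph V} {A : Matrix V V 𝕜}
  {x : V → 𝕜}

theorem mulVec_indicator_eq_zero_of_posSemidef (hA : A.PosSemidef) {C : Set V}
    (hx : ∀ i ∈ C, A.mulVec x i = 0) (hC : ∀ i ∈ C, ∀ j ∉ C, A i j * x j = 0) :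
    A.mulVec (C.indicator x) = 0 := by
  refine (hA.dotProduct_mulVec_zero_iff _).1 (Finset.sum_eq_zero fun i _ => ?_)
  by_cases hi : i ∈ C
  · rw [mulVec_indicator_apply_of_mul_eq_zero A (hC i hi), hx i hi, mul_zero]
  · rw [Pi.star_apply, Set.indicator_of_notMem hi, star_zero, zero_mul]

theorem mulVec_indicator_componentWithin_eq_zero (hA : A.PosSemidef)
    (hAG : ∀ i j : V, i ≠ j → A i j ≠ 0 → G.Adj i j) {S : Set V}
    (hx : ∀ i ∈ S, A.mulVec x i = 0) (hxS : ∀ i ∉ S, x i = 0) (w : V) :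
    A.mulVec ((componentWithin G S w).indicator x) = 0 := by
  refine mulVec_indicator_eq_zero_of_posSemidef hA (fun i ⟨hiS, _⟩ => hx i hiS)
    fun i hi j hj => ?_
  by_cases hjS : j ∈ S
  · have hAij : A i j = 0 := by
      by_contra hne
      exact hj (mem_componentWithin_of_adj hi (hAG i j (ne_of_mem_of_not_mem hi hj) hne) hjS)
    rw [hAij, zero_mul]
  · rw [hxS j hjS, mul_zero]

variable [DecidableEq V]

theorem eq_zero_on_of_psdzfStep (hA : A.PosSemidef)
    (hpat : ∀ i j : V, i ≠ j → (A i j ≠ 0 ↔ G.Adj i j)) {B B' : Finset V}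
    (hstep : PSDZFStep G B B') (hx : A.mulVec x = 0) (hxB : ∀ i ∈ B, x i = 0) :
    ∀ i ∈ B', x i = 0 := by
  obtain ⟨v, hv, w, hw, hvw, hunique, rfl⟩ := hstep
  let C := componentWithin G {a | a ∉ B} w
  have hwC : w ∈ C := mem_componentWithin_self hw
  have hAy : A.mulVec (C.indicator x) = 0 :=
    mulVec_indicator_componentWithin_eq_zero hA (fun i j hij => (hpat i j hij).1)
      (fun i _ => congrFun hx i) (fun i hi => hxB i (not_not.1 hi)) w
  have hrow : ∀ u ≠ w, A v u * C.indicator x u = 0 := by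
    intro u huw
    by_cases hu : u ∈ C
    · obtain ⟨huB, _, hreach⟩ := hu
      have hAvu : A v u = 0 := by
        by_contra hne
        exact huw (hunique u ((hpat v u (ne_of_mem_of_not_mem hv huB)).1 hne) huB hreach)
      rw [hAvu, zero_mul]
    · rw [Set.indicator_of_notMem hu, mul_zero]
  have hmul : A v w * x w = 0 :=
    calc A v w * x w = A v w * C.indicator x w := by rw [Set.indicator_of_mem hwC]
      _ = A.mulVec (C.indicator x) v := (Fintype.sum_eq_single w hrow).symm
      _ = 0 := congrFun hAy v
  have hxw : x w = 0 := (mul_eq_zero.1 hmul).resolve_left ((hpat v w hvw.ne).2 hvw)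
  exact (Finset.forall_mem_insert _ _ _).2 ⟨hxw, hxB⟩

theorem eq_zero_on_of_reflTransGen_psdzfStep (hA : A.PosSemidef)
    (hpat : ∀ i j : V, i ≠ j → (A i j ≠ 0 ↔ G.Adj i j)) {B B' : Finset V}
    (hBB' : Relation.ReflTransGen (PSDZFStep G) B B') (hx : A.mulVec x = 0)
    (hxB : ∀ i ∈ B, x i = 0) : ∀ i ∈ B', x i = 0 := by
  induction hBB' with
  | refl => exact hxB
  | tail _ hstep ih => exact eq_zero_on_of_psdzfStep hA hpat hstep hx ih

theorem eq_zero_of_isPSDZeroForcingSet (hA : A.PosSemidef)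
    (hpat : ∀ i j : V, i ≠ j → (A i j ≠ 0 ↔ G.Adj i j)) {B : Finset V}
    (hB : IsPSDZeroForcingSet G B) (hx : A.mulVec x = 0) (hxB : ∀ i ∈ B, x i = 0) : x = 0 :=
  funext fun i => eq_zero_on_of_reflTransGen_psdzfStep hA hpat hB hx hxB i (Finset.mem_univ i)

end PosSemidef

theorem nullity_le_card_psd_zero_forcing_set_general
    {V 𝕜 : Type*} [Fintype V] [DecidableEq V] [RCLike 𝕜] (G : SimpleGraph V)
    (B : Finset V) (hB : IsPSDZeroForcingSet G B)
    (A : Matrix V V 𝕜) (hA : A.PosSemidef)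
    (hpat : ∀ i j : V, i ≠ j → (A i j ≠ 0 ↔ G.Adj i j)) :
    Module.finrank 𝕜 (LinearMap.ker A.mulVecLin) ≤ B.card :=
  finrank_submodule_le_card_of_eq_zero_on _ B fun _ hx hxB =>
    eq_zero_of_isPSDZeroForcingSet hA hpat hB hx hxB

/-- If `B` is a positive semidefinite zero forcing set of `G` then the nullity of any
positive semidefinite `A ∈ S(G)` is at most the cardinality of `B`. -/
theorem nullity_le_card_psd_zero_forcing_set
    {V : Type*} [Fintype V] [DecidableEq V] (G : SimpleGraph V)
    (B : Finset V) (hB : IsPSDZeroForcingSet G B)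
    (A : Matrix V V ℂ) (hA : A.PosSemidef)
    (hpat : ∀ i j : V, i ≠ j → (A i j ≠ 0 ↔ G.Adj i j)) :
    Module.finrank ℂ (LinearMap.ker A.mulVecLin) ≤ B.card :=
  nullity_le_card_psd_zero_forcing_set_general G B hB A hA hpat
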